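/- Let l > 0 and Λ ∈ ℝ, and let h, φ : (0, l) → ℝ be smooth strictly positive functions satisfying h''(s)/h(s) + (φ'(s)/φ(s))·(h'(s)/h(s)) + Λ + φ''(s)/φ(s) ≤ 0 for all s ∈ (0, l). Then for every smooth function f : ℝ → ℝ whose support is a compact subset of (0, l), writing u(s) = h'(s)/h(s) and v(s) = φ'(s)/φ(s), one has ∫₀ˡ [ (1/2)·(u(s)+v(s))²·f(s)² + (1/2)·(u(s)²+v(s)²)·f(s)² + Λ·f(s)² ] ds ≤ 2·∫₀ˡ f(s)·f'(s)·(u(s)+v(s)) ds. -/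

import Mathlib

open MeasureTheory Set

/-!
With `u = h'/h` and `v = φ'/φ`, the hypothesis on `h` and `φ` is the Riccati inequality
`(u + v)' + (u² + u v + v² + Λ) ≤ 0`, where
`u² + u v + v² = (1/2) (u + v)² + (1/2) (u² + v²)`. Multiplied by `f²`, this inequality reads
`(f² (u + v))' ≤ 2 f f' (u + v) - (u² + u v + v² + Λ) f²`, and `f² (u + v)` vanishes at both
endpoints, so the integral of the right-hand side is nonnegative. The one-sided fundamental theorem
of calculus used for this does not require `(u + v)'` to be integrable.
-/

theorem hasDerivAt_logDeriv {𝕜 𝕜' : Type*} [NontriviallyNormedField 𝕜]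
    [NontriviallyNormedField 𝕜'] [NormedAlgebra 𝕜 𝕜'] {g : 𝕜 → 𝕜'} {x : 𝕜}
    (hg : DifferentiableAt 𝕜 g x) (hg' : DifferentiableAt 𝕜 (deriv g) x) (hgx : g x ≠ 0) :
    HasDerivAt (logDeriv g) (deriv (deriv g) x / g x - logDeriv g x ^ 2) x := by
  refine (hg'.hasDerivAt.div hg.hasDerivAt hgx).congr_deriv ?_
  rw [logDeriv_apply]
  field_simp

section IntegralInequality

variable {a b : ℝ} {f : ℝ → ℝ}

theorem integral_mul_sq_le_of_hasDerivAt_add_nonpos {q w w' : ℝ → ℝ} (hab : a ≤ b)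
    (hq : ContinuousOn q (Ioo a b)) (hw : ∀ s ∈ Ioo a b, HasDerivAt w (w' s) s)
    (hle : ∀ s ∈ Ioo a b, w' s + q s ≤ 0) (hf : ContDiff ℝ 1 f) (hfsupp : tsupport f ⊆ Ioo a b) :
    ∫ s in a..b, q s * f s ^ 2 ≤ 2 * ∫ s in a..b, f s * deriv f s * w s := by
  have hwc : ContinuousOn w (Ioo a b) := fun s hs => (hw s hs).continuousAt.continuousWithinAt
  have hfc : ContinuousOn f (Ioo a b) := hf.continuous.continuousOn
  have hf'c : ContinuousOn (deriv f) (Ioo a b) := (hf.continuous_deriv le_rfl).continuousOn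
  have continuous_f_mul (g : ℝ → ℝ) (hg : ContinuousOn g (Ioo a b)) :
      Continuous fun s => f s * g s :=
    (hfc.mul hg).continuous_of_tsupport_subset isOpen_Ioo (tsupport_mul_subset_left.trans hfsupp)
  have hqf : Continuous fun s => q s * f s ^ 2 :=
    (continuous_f_mul (fun s => f s * q s) (hfc.mul hq)).congr fun s => by ring
  have hffw : Continuous fun s => f s * deriv f s * w s :=
    (continuous_f_mul (fun s => deriv f s * w s) (hf'c.mul hwc)).congr fun s => by ring
  have hffw2 : Continuous fun s => 2 * (f s * deriv f s * w s) := hffw.const_mul 2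
  have hfw : Continuous fun s => f s ^ 2 * w s :=
    (continuous_f_mul (fun s => f s * w s) (hfc.mul hwc)).congr fun s => by ring
  have hfa : f a = 0 := image_eq_zero_of_notMem_tsupport fun h => left_notMem_Ioo (hfsupp h)
  have hfb : f b = 0 := image_eq_zero_of_notMem_tsupport fun h => right_notMem_Ioo (hfsupp h)
  have hderiv (s : ℝ) (hs : s ∈ Ioo a b) : HasDerivAt (fun s => f s ^ 2 * w s)
      (2 * (f s * deriv f s * w s) + f s ^ 2 * w' s) s := by
    have hfs : HasDerivAt f (deriv f s) s := (hf.differentiable one_ne_zero s).hasDerivAt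
    exact ((hfs.fun_pow 2).mul (hw s hs)).congr_deriv (by ring)
  have hderiv_le (s : ℝ) (hs : s ∈ Ioo a b) : 2 * (f s * deriv f s * w s) + f s ^ 2 * w' s ≤
      2 * (f s * deriv f s * w s) - q s * f s ^ 2 := by
    linear_combination f s ^ 2 * hle s hs
  have hint : f b ^ 2 * w b - f a ^ 2 * w a ≤
      ∫ s in a..b, (2 * (f s * deriv f s * w s) - q s * f s ^ 2) :=
    intervalIntegral.sub_le_integral_of_hasDeriv_right_of_le hab hfw.continuousOn
      (fun s hs => (hderiv s hs).hasDerivWithinAt) (hffw2.sub hqf).integrableOn_Icc hderiv_le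
  rw [intervalIntegral.integral_sub (hffw2.intervalIntegrable a b) (hqf.intervalIntegrable a b),
    intervalIntegral.integral_const_mul, hfa, hfb] at hint
  linear_combination hint

theorem stmt_3_general {Λ h φ : ℝ → ℝ} (hab : a ≤ b) (hΛ : ContinuousOn Λ (Ioo a b))
    (hh : DifferentiableOn ℝ h (Ioo a b)) (hh' : DifferentiableOn ℝ (deriv h) (Ioo a b))
    (hφ : DifferentiableOn ℝ φ (Ioo a b)) (hφ' : DifferentiableOn ℝ (deriv φ) (Ioo a b))
    (hh0 : ∀ s ∈ Ioo a b, h s ≠ 0) (hφ0 : ∀ s ∈ Ioo a b, φ s ≠ 0)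
    (hineq : ∀ s ∈ Ioo a b, deriv (deriv h) s / h s + logDeriv φ s * logDeriv h s + Λ s
      + deriv (deriv φ) s / φ s ≤ 0)
    (hf : ContDiff ℝ 1 f) (hfsupp : tsupport f ⊆ Ioo a b) :
    ∫ s in a..b, ((1 / 2) * (logDeriv h s + logDeriv φ s) ^ 2 * f s ^ 2
        + (1 / 2) * (logDeriv h s ^ 2 + logDeriv φ s ^ 2) * f s ^ 2 + Λ s * f s ^ 2) ≤
      2 * ∫ s in a..b, f s * deriv f s * (logDeriv h s + logDeriv φ s) := by
  have huc : ContinuousOn (logDeriv h) (Ioo a b) := hh'.continuousOn.div hh.continuousOn hh0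
  have hvc : ContinuousOn (logDeriv φ) (Ioo a b) := hφ'.continuousOn.div hφ.continuousOn hφ0
  have hderiv (s : ℝ) (hs : s ∈ Ioo a b) : HasDerivAt (fun s => logDeriv h s + logDeriv φ s)
      (deriv (deriv h) s / h s - logDeriv h s ^ 2
        + (deriv (deriv φ) s / φ s - logDeriv φ s ^ 2)) s := by
    have hs' : Ioo a b ∈ nhds s := isOpen_Ioo.mem_nhds hs
    exact (hasDerivAt_logDeriv (hh.differentiableAt hs') (hh'.differentiableAt hs') (hh0 s hs)).add
      (hasDerivAt_logDeriv (hφ.differentiableAt hs') (hφ'.differentiableAt hs') (hφ0 s hs))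
  simp only [← add_mul]
  refine integral_mul_sq_le_of_hasDerivAt_add_nonpos hab (by fun_prop) hderiv (fun s hs => ?_)
    hf hfsupp
  linear_combination hineq s hs

end IntegralInequality

/-- Rearranged form of the integrated differential inequality in the proof of
Proposition 2.3: with `u = h'/h` and `v = φ'/φ`,
`∫₀ˡ [(1/2)(u+v)² f² + (1/2)(u²+v²) f² + Λ f²] ds ≤ 2 ∫₀ˡ f f' (u+v) ds`. -/
theorem stmt_3 (l Λ : ℝ) (hl : 0 < l) (h φ : ℝ → ℝ)
    (hh : ContDiffOn ℝ (⊤ : ℕ∞) h (Set.Ioo 0 l)) (hφ : ContDiffOn ℝ (⊤ : ℕ∞) φ (Set.Ioo 0 l))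
    (hhpos : ∀ s ∈ Set.Ioo 0 l, 0 < h s) (hφpos : ∀ s ∈ Set.Ioo 0 l, 0 < φ s)
    (hineq : ∀ s ∈ Set.Ioo 0 l,
      deriv (deriv h) s / h s + (deriv φ s / φ s) * (deriv h s / h s) + Λ
        + deriv (deriv φ) s / φ s ≤ 0)
    (f : ℝ → ℝ) (hf : ContDiff ℝ (⊤ : ℕ∞) f)
    (hfc : HasCompactSupport f) (hfsupp : tsupport f ⊆ Set.Ioo 0 l)
    (u v : ℝ → ℝ)
    (hu : ∀ s, u s = deriv h s / h s) (hv : ∀ s, v s = deriv φ s / φ s) :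
    (∫ s in (0:ℝ)..l,
        ((1 / 2) * (u s + v s) ^ 2 * f s ^ 2
          + (1 / 2) * (u s ^ 2 + v s ^ 2) * f s ^ 2
          + Λ * f s ^ 2)) ≤
      2 * ∫ s in (0:ℝ)..l, f s * deriv f s * (u s + v s) := by
  obtain ⟨hhd, hh'⟩ := (contDiffOn_infty_iff_deriv_of_isOpen isOpen_Ioo).1 hh
  obtain ⟨hφd, hφ'⟩ := (contDiffOn_infty_iff_deriv_of_isOpen isOpen_Ioo).1 hφ
  simp_rw [hu, hv]
  exact stmt_3_general (Λ := fun _ => Λ) hl.le continuousOn_const hhd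
    (hh'.differentiableOn (by simp)) hφd (hφ'.differentiableOn (by simp))
    (fun s hs => (hhpos s hs).ne') (fun s hs => (hφpos s hs).ne') hineq (hf.of_le (by simp)) hfsupp
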